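/- Let u : A → B be a morphism of noetherian rings, M a finitely generated A-module, N a finitely generated B-module which is flat as an A-module, and n a natural number. Consider M ⊗_A N as a B-module. If M satisfies Serre's condition (S_n) and for every P ∈ Supp(M) the fiber module N_P/PN_P satisfies (S_n) as a module over B_P/PB_P, then M ⊗_A N satisfies the condition (C_{n+1}) as a B-module. -/

import Mathlib

noncomputable section

open TensorProduct

universe u v w





/-- The depth of the ideal `I` on the module `M`: the supremum of lengths of
`M`-regular sequences with entries in `I`. -/
noncomputable def idealDepth (A : Type u) [CommRing A] (I : Ideal A)
    (M : Type v) [AddCommGroup M] [Module A M] : ℕ∞ :=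
  sSup {n : ℕ∞ | ∃ rs : List A, (rs.length : ℕ∞) = n ∧ (∀ r ∈ rs, r ∈ I) ∧
    RingTheory.Sequence.IsRegular M rs}

/-- The depth of a module over a local ring. -/
noncomputable def localDepth (A : Type u) [CommRing A] [IsLocalRing A]
    (M : Type v) [AddCommGroup M] [Module A M] : ℕ∞ :=
  idealDepth A (IsLocalRing.maximalIdeal A) M

/-- The (Krull) dimension of a module, i.e. the Krull dimension of its support. -/
noncomputable def supportDim (A : Type u) [CommRing A]
    (M : Type v) [AddCommGroup M] [Module A M] : WithBot ℕ∞ :=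
  Order.krullDim (Module.support A M)

/-- `depth (M_P)` : the depth of the localization of `M` at a prime `P`,
over the local ring `A_P`. -/
noncomputable def depthAt (A : Type u) [CommRing A]
    (M : Type v) [AddCommGroup M] [Module A M] (P : PrimeSpectrum A) : ℕ∞ :=
  localDepth (Localization.AtPrime P.asIdeal) (LocalizedModule P.asIdeal.primeCompl M)

/-- `ht_M(P) = dim (M_P)` : the height of a prime `P` in the support of `M`,
i.e. the dimension of the localized module `M_P` over `A_P`. -/
noncomputable def heightAt (A : Type u) [CommRing A]
    (M : Type v) [AddCommGroup M] [Module A M] (P : PrimeSpectrum A) : WithBot ℕ∞ :=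
  supportDim (Localization.AtPrime P.asIdeal) (LocalizedModule P.asIdeal.primeCompl M)

/-- Serre's condition `(S_n)` for a module: for every `P` in the support,
`depth (M_P) ≥ min (n, ht_M(P))`. -/
def SerreCondS (A : Type u) [CommRing A] (n : ℕ)
    (M : Type v) [AddCommGroup M] [Module A M] : Prop :=
  ∀ P ∈ Module.support A M,
    min (n : WithBot ℕ∞) (heightAt A M P) ≤ (depthAt A M P : WithBot ℕ∞)

/-- The condition `(C_n)` for a module: for every `P` in the support,
`depth (M_P) ≥ min (n, ht_M(P)) - 1`, equivalently
`min (n, ht_M(P)) ≤ depth (M_P) + 1`. -/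
def CondC (A : Type u) [CommRing A] (n : ℕ)
    (M : Type v) [AddCommGroup M] [Module A M] : Prop :=
  ∀ P ∈ Module.support A M,
    min (n : WithBot ℕ∞) (heightAt A M P) ≤ (depthAt A M P : WithBot ℕ∞) + 1

/-- A module `M` is almost Cohen-Macaulay if `depth(P, M) = depth (M_P)` for every
`P` in the support of `M` (Kang's definition). -/
def IsAlmostCMModule (A : Type u) [CommRing A]
    (M : Type v) [AddCommGroup M] [Module A M] : Prop :=
  ∀ P ∈ Module.support A M, idealDepth A P.asIdeal M = depthAt A M P

/-- A module `M` is Cohen-Macaulay if `depth (M_P) = dim (M_P)` for every `P` in its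
support. -/
def IsCMModule (A : Type u) [CommRing A]
    (M : Type v) [AddCommGroup M] [Module A M] : Prop :=
  ∀ P ∈ Module.support A M, (depthAt A M P : WithBot ℕ∞) = heightAt A M P

/-- A ring is almost Cohen-Macaulay if it is an almost Cohen-Macaulay module over
itself. -/
abbrev IsAlmostCMRing (A : Type u) [CommRing A] : Prop := IsAlmostCMModule A A

/-- A ring is Cohen-Macaulay if it is a Cohen-Macaulay module over itself, i.e. all its
localizations at primes have depth equal to dimension. -/
abbrev IsCMRing (A : Type u) [CommRing A] : Prop := IsCMModule A A

/-- A ring satisfies `(C_n)` if it does so as a module over itself. -/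
abbrev RingCondC (A : Type u) [CommRing A] (n : ℕ) : Prop := CondC A n A

/-- A ring satisfies `(S_n)` if it does so as a module over itself. -/
abbrev RingSerreCondS (A : Type u) [CommRing A] (n : ℕ) : Prop := SerreCondS A n A






variable (A : Type u) [CommRing A] (B : Type u) [CommRing B] [Algebra A B]

/-- The image in `B` of the complement of a prime `P` of `A`, as a submonoid of `B`. -/
noncomputable def fiberSubmonoid (P : PrimeSpectrum A) : Submonoid B :=
  Submonoid.map (algebraMap A B) P.asIdeal.primeCompl

/-- `PB_P` : the extension of the prime `P` of `A` to the localization `B_P` of `B`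
at (the image of) the complement of `P`. -/
noncomputable def fiberIdeal (P : PrimeSpectrum A) :
    Ideal (Localization (fiberSubmonoid A B P)) :=
  Ideal.map ((algebraMap B (Localization (fiberSubmonoid A B P))).comp (algebraMap A B))
    P.asIdeal

/-- The fiber ring `B_P / P B_P` of `A → B` at a prime `P` of `A`. -/
noncomputable def fiberRing (P : PrimeSpectrum A) : Type u :=
  Localization (fiberSubmonoid A B P) ⧸ fiberIdeal A B P

noncomputable instance (P : PrimeSpectrum A) : CommRing (fiberRing A B P) :=
  inferInstanceAs (CommRing (Localization (fiberSubmonoid A B P) ⧸ fiberIdeal A B P))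

/-- The fiber module `N_P / P N_P` of a `B`-module `N` at a prime `P` of `A`. -/
noncomputable def fiberModule (P : PrimeSpectrum A)
    (N : Type u) [AddCommGroup N] [Module B N] : Type u :=
  LocalizedModule (fiberSubmonoid A B P) N ⧸
    (fiberIdeal A B P •
      (⊤ : Submodule (Localization (fiberSubmonoid A B P))
        (LocalizedModule (fiberSubmonoid A B P) N)))

noncomputable instance (P : PrimeSpectrum A) (N : Type u) [AddCommGroup N] [Module B N] :
    AddCommGroup (fiberModule A B P N) :=
  inferInstanceAs (AddCommGroup (LocalizedModule (fiberSubmonoid A B P) N ⧸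
    (fiberIdeal A B P •
      (⊤ : Submodule (Localization (fiberSubmonoid A B P))
        (LocalizedModule (fiberSubmonoid A B P) N)))))

/-- `N_P / P N_P` is a module over the fiber ring `B_P / P B_P`. -/
noncomputable instance (P : PrimeSpectrum A) (N : Type u) [AddCommGroup N] [Module B N] :
    Module (fiberRing A B P) (fiberModule A B P N) :=
  inferInstanceAs (Module (Localization (fiberSubmonoid A B P) ⧸ fiberIdeal A B P)
    (LocalizedModule (fiberSubmonoid A B P) N ⧸
      (fiberIdeal A B P •
        (⊤ : Submodule (Localization (fiberSubmonoid A B P))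
          (LocalizedModule (fiberSubmonoid A B P) N)))))








/-- The canonical `B`-module structure on `M ⊗[A] N`, where `N` is a `B`-module,
given by `b • (m ⊗ n) = m ⊗ (b • n)`. -/
noncomputable instance tensorRightModule (A : Type u) [CommRing A] (B : Type u) [CommRing B]
    [Algebra A B] (M : Type u) [AddCommGroup M] [Module A M]
    (N : Type u) [AddCommGroup N] [Module A N] [Module B N] [IsScalarTower A B N] :
    Module B (M ⊗[A] N) where
  smul b x := (TensorProduct.comm A M N).symm (b • TensorProduct.comm A M N x)
  one_smul x := by
    show (TensorProduct.comm A M N).symm ((1 : B) • TensorProduct.comm A M N x) = x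
    simp
  mul_smul a b x := by
    show (TensorProduct.comm A M N).symm ((a * b) • TensorProduct.comm A M N x) =
      (TensorProduct.comm A M N).symm (a • TensorProduct.comm A M N
        ((TensorProduct.comm A M N).symm (b • TensorProduct.comm A M N x)))
    simp [mul_smul]
  smul_zero b := by
    show (TensorProduct.comm A M N).symm (b • TensorProduct.comm A M N 0) = 0
    simp
  smul_add b x y := by
    show (TensorProduct.comm A M N).symm (b • TensorProduct.comm A M N (x + y)) =
      (TensorProduct.comm A M N).symm (b • TensorProduct.comm A M N x) +
      (TensorProduct.comm A M N).symm (b • TensorProduct.comm A M N y)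
    simp
  add_smul a b x := by
    show (TensorProduct.comm A M N).symm ((a + b) • TensorProduct.comm A M N x) =
      (TensorProduct.comm A M N).symm (a • TensorProduct.comm A M N x) +
      (TensorProduct.comm A M N).symm (b • TensorProduct.comm A M N x)
    simp [add_smul]
  zero_smul x := by
    show (TensorProduct.comm A M N).symm ((0 : B) • TensorProduct.comm A M N x) = 0
    simp

/-!
Localizing at a prime `Q` of `B` over `P` turns `A → B` into a local homomorphism `R → S` of
noetherian local rings, with `N` flat over `R` and fiber `F = N ⊗ R/𝔪`. By the local criterion of
flatness, an `F`-regular sequence `y` in `S` is regular on `N ⊗ M` and `N/yN` is still flat over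
`R`, so that an `M`-regular sequence in `R` remains regular on `N/yN ⊗ M`.
Hence `depth M + depth F ≤ depth (N ⊗ M)`, while `dim (N ⊗ M) ≤ dim M + dim F` holds always.
Since `min n (a + b) ≤ min n a + min n b`, the module `N ⊗ M` even satisfies `(S_n)`, which implies
`(C_{n+1})`.
-/

section TensorReduction

variable {R S : Type*} [CommRing R] [CommRing S] [Algebra R S]
  {M N : Type*} [AddCommGroup M] [Module R M]
  [AddCommGroup N] [Module R N] [Module S N] [IsScalarTower R S N]

/-- `N ⊗ R/I ≃ N/IN` as `S`-modules, for an `S`-module `N` and an ideal `I` of the base ring. -/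
def tensorQuotEquivQuotMapSMul (I : Ideal R) :
    N ⊗[R] (R ⧸ I) ≃ₗ[S] N ⧸ (I.map (algebraMap R S) • ⊤ : Submodule S N) :=
  (AlgebraTensorModule.cancelBaseChange R S S N (R ⧸ I)).symm ≪≫ₗ
    AlgebraTensorModule.congr (LinearEquiv.refl S N)
      (Algebra.TensorProduct.quotIdealMapEquivTensorQuot S I).symm.toLinearEquiv ≪≫ₗ
    tensorQuotEquivQuotSMul N (I.map (algebraMap R S))

/-- `N ⊗ M/IM ≃ (N ⊗ M)/I(N ⊗ M)` as `S`-modules, for an ideal `I` of the base ring. -/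
def tensorQuotSMulEquivQuotMapSMul (I : Ideal R) :
    N ⊗[R] (M ⧸ (I • ⊤ : Submodule R M)) ≃ₗ[S]
      (N ⊗[R] M) ⧸ (I.map (algebraMap R S) • ⊤ : Submodule S (N ⊗[R] M)) :=
  AlgebraTensorModule.congr (LinearEquiv.refl S N) (tensorQuotEquivQuotSMul M I).symm ≪≫ₗ
    (AlgebraTensorModule.assoc R R S N M (R ⧸ I)).symm ≪≫ₗ
    tensorQuotEquivQuotMapSMul I

variable (M N) in
/-- Reduction modulo an element of the base ring passes to the right factor of `N ⊗ M`. -/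
def quotSMulTopAlgebraMapTensorEquiv (x : R) :
    QuotSMulTop (algebraMap R S x) (N ⊗[R] M) ≃ₗ[S] N ⊗[R] QuotSMulTop x M :=
  Submodule.quotEquivOfEq _ _ (by
      rw [Ideal.map_span, Set.image_singleton, Submodule.ideal_span_singleton_smul]) ≪≫ₗ
    (tensorQuotSMulEquivQuotMapSMul (Ideal.span {x})).symm ≪≫ₗ
    AlgebraTensorModule.congr (LinearEquiv.refl S N)
      (Submodule.quotEquivOfEq _ _ (Submodule.ideal_span_singleton_smul x ⊤))

/-- Reduction modulo an element of `S` passes to the left factor of `N ⊗ M`. -/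
def quotSMulTopTensorEquiv (y : S) :
    QuotSMulTop y N ⊗[R] M ≃ₗ[S] QuotSMulTop y (N ⊗[R] M) :=
  AlgebraTensorModule.congr
      (QuotSMulTop.equivQuotTensor y N) (LinearEquiv.refl R M) ≪≫ₗ
    AlgebraTensorModule.assoc R S S (S ⧸ Ideal.span {y}) N M ≪≫ₗ
    (QuotSMulTop.equivQuotTensor y (N ⊗[R] M)).symm

@[simp]
lemma quotSMulTopTensorEquiv_mk_tmul (y : S) (n : N) (m : M) :
    quotSMulTopTensorEquiv y ((Submodule.Quotient.mk n : QuotSMulTop y N) ⊗ₜ[R] m) =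
      Submodule.Quotient.mk (n ⊗ₜ m) := by
  rw [quotSMulTopTensorEquiv, LinearEquiv.trans_apply, LinearEquiv.trans_apply,
    LinearEquiv.symm_apply_eq]
  rfl

lemma finite_tensor [Module.Finite R M] [Module.Finite S N] : Module.Finite S (N ⊗[R] M) :=
  Module.Finite.equiv (AlgebraTensorModule.cancelBaseChange R S S N M)

variable (R S M N) in
lemma annihilator_le_annihilator_tensor_left :
    Module.annihilator S N ≤ Module.annihilator S (N ⊗[R] M) := fun s hs ↦ by
  rw [Module.mem_annihilator_iff_lsmul_eq_zero]
  ext n m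
  simp [TensorProduct.smul_tmul', Module.mem_annihilator.mp hs n]

variable (R S M N) in
lemma map_annihilator_le_annihilator_tensor :
    (Module.annihilator R M).map (algebraMap R S) ≤ Module.annihilator S (N ⊗[R] M) := by
  rw [Ideal.map_le_iff_le_comap, Module.comap_annihilator]
  intro r hr
  rw [Module.mem_annihilator_iff_lsmul_eq_zero]
  ext n m
  simp [← TensorProduct.tmul_smul, Module.mem_annihilator.mp hr m]

lemma support_tensor_subset [Module.Finite S N] :
    Module.support S (N ⊗[R] M) ⊆ Module.support S N ∩
      PrimeSpectrum.zeroLocus ((Module.annihilator R M).map (algebraMap R S)) := by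
  intro q hq
  have h := Module.annihilator_le_of_mem_support hq
  exact ⟨Module.mem_support_iff_of_finite.mpr
      ((annihilator_le_annihilator_tensor_left R S M N).trans h),
    (map_annihilator_le_annihilator_tensor R S M N).trans h⟩

end TensorReduction

section Regularity

open RingTheory.Sequence IsLocalRing

variable {R S : Type*} [CommRing R] [CommRing S] [Algebra R S]
  {M N : Type*} [AddCommGroup M] [Module R M]
  [AddCommGroup N] [Module R N] [Module S N] [IsScalarTower R S N]

lemma isSMulRegular_of_isHausdorff (I : Ideal R) [IsHausdorff I M] {x : R}
    (h : ∀ k : ℕ, IsSMulRegular (M ⧸ (I ^ k • ⊤ : Submodule R M)) x) : IsSMulRegular M x := by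
  refine .of_right_eq_zero_of_smul fun m hm ↦ IsHausdorff.haus ‹_› m fun k ↦ ?_
  rw [SModEq.zero, ← Submodule.Quotient.mk_eq_zero]
  refine (h k).right_eq_zero_of_smul ?_
  rw [← Submodule.Quotient.mk_smul, hm, Submodule.Quotient.mk_zero]

lemma isSMulRegular_tensor_of_exact [Module.Flat R N] {y : S}
    {M₁ M₂ M₃ : Type*} [AddCommGroup M₁] [Module R M₁] [AddCommGroup M₂] [Module R M₂]
    [AddCommGroup M₃] [Module R M₃] (f : M₁ →ₗ[R] M₂) (g : M₂ →ₗ[R] M₃)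
    (hf : Function.Injective f) (hfg : Function.Exact f g)
    (h₁ : IsSMulRegular (N ⊗[R] M₁) y) (h₃ : IsSMulRegular (N ⊗[R] M₃) y) :
    IsSMulRegular (N ⊗[R] M₂) y := by
  refine isSMulRegular_of_range_eq_ker (f := AlgebraTensorModule.lTensor S N f)
    (g := AlgebraTensorModule.lTensor S N g)
    (Module.Flat.lTensor_preserves_injective_linearMap f hf) ?_ h₁ h₃
  ext z
  exact (Module.Flat.lTensor_exact N hfg z).symm

section Noetherian

variable [IsNoetherianRing R] [Module.Finite R M] [Module.Flat R N]
  {𝔪 : Ideal R} [𝔪.IsMaximal] {y : S}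

lemma isSMulRegular_tensor_of_pow_le_annihilator (hy : IsSMulRegular (N ⊗[R] (R ⧸ 𝔪)) y) {k : ℕ}
    (hM : 𝔪 ^ k ≤ Module.annihilator R M) : IsSMulRegular (N ⊗[R] M) y := by
  revert hM
  induction ‹Module.Finite R M› using
    IsNoetherianRing.induction_on_isQuotientEquivQuotientPrime R with
  | subsingleton L => exact fun _ ↦ Function.injective_of_subsingleton _
  | quotient L p e =>
    intro hL
    rw [e.annihilator_eq, Ideal.annihilator_quotient] at hL
    have h𝔪 : 𝔪 = p.1 := ‹𝔪.IsMaximal›.eq_of_le p.2.ne_top (p.2.le_of_pow_le hL)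
    let e' : L ≃ₗ[R] R ⧸ 𝔪 := e ≪≫ₗ Submodule.quotEquivOfEq _ _ h𝔪.symm
    exact ((AlgebraTensorModule.congr (LinearEquiv.refl S N) e').isSMulRegular_congr y).mpr hy
  | exact L₁ L₂ L₃ f g hf hg hfg h₁ h₃ =>
    intro hL
    exact isSMulRegular_tensor_of_exact f g hf hfg
      (h₁ (hL.trans (f.annihilator_le_of_injective hf)))
      (h₃ (hL.trans (g.annihilator_le_of_surjective hg)))

lemma isSMulRegular_tensor_of_isHausdorff [IsHausdorff (𝔪.map (algebraMap R S)) (N ⊗[R] M)]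
    (hy : IsSMulRegular (N ⊗[R] (R ⧸ 𝔪)) y) : IsSMulRegular (N ⊗[R] M) y := by
  refine isSMulRegular_of_isHausdorff (𝔪.map (algebraMap R S)) fun k ↦ ?_
  rw [← Ideal.map_pow, ← (tensorQuotSMulEquivQuotMapSMul (𝔪 ^ k)).isSMulRegular_congr]
  refine isSMulRegular_tensor_of_pow_le_annihilator hy (k := k) ?_
  rw [Submodule.annihilator_quotient]
  exact fun r hr ↦ Submodule.mem_colon.mpr fun m _ ↦ Submodule.smul_mem_smul hr Submodule.mem_top

end Noetherian

variable [IsLocalRing R] [IsNoetherianRing R] [IsLocalRing S] [IsNoetherianRing S]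
  [IsLocalHom (algebraMap R S)] [Module.Finite S N] [Module.Flat R N]

variable (M) in
lemma isSMulRegular_tensor_of_isSMulRegular_fiber [Module.Finite R M] {y : S}
    (hy : IsSMulRegular (N ⊗[R] (R ⧸ maximalIdeal R)) y) : IsSMulRegular (N ⊗[R] M) y := by
  have := finite_tensor (R := R) (S := S) (M := M) (N := N)
  have := IsHausdorff.of_isLocalRing _ (N ⊗[R] M) (map_maximalIdeal_lt_top (algebraMap R S)).ne
  exact isSMulRegular_tensor_of_isHausdorff hy

lemma flat_quotSMulTop_of_isSMulRegular_fiber {y : S}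
    (hy : IsSMulRegular (N ⊗[R] (R ⧸ maximalIdeal R)) y) : Module.Flat R (QuotSMulTop y N) := by
  refine Module.Flat.iff_lTensor_injective'.mpr fun I ↦ ?_
  let f := AlgebraTensorModule.lTensor S N I.subtype
  have hf : Function.Exact (0 : PUnit →ₗ[S] _) f :=
    (LinearMap.exact_zero_iff_injective _ _).mpr
      (Module.Flat.lTensor_preserves_injective_linearMap I.subtype I.injective_subtype)
  have hfg : Function.Exact f (AlgebraTensorModule.lTensor S N I.mkQ) :=
    Module.Flat.lTensor_exact N (LinearMap.exact_subtype_mkQ I)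
  have hinj : Function.Injective (QuotSMulTop.map y f) := by
    have := QuotSMulTop.map_first_exact_on_four_term_exact_of_isSMulRegular_last hf hfg
      (isSMulRegular_tensor_of_isSMulRegular_fiber (R ⧸ I) hy)
    rwa [map_zero, LinearMap.exact_zero_iff_injective] at this
  have hcomm : QuotSMulTop.map y f ∘ₗ (quotSMulTopTensorEquiv y).toLinearMap =
      (quotSMulTopTensorEquiv y).toLinearMap ∘ₗ AlgebraTensorModule.lTensor S _ I.subtype := by
    ext n i
    simp [f]
  refine Function.Injective.of_comp (f := quotSMulTopTensorEquiv (S := S) y) ?_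
  convert hinj.comp (quotSMulTopTensorEquiv (R := R) (M := I) y).injective
  exact congrArg DFunLike.coe hcomm.symm

theorem isWeaklyRegular_tensor [Module.Finite R M] {ys : List S} {xs : List R}
    (hys : IsWeaklyRegular (N ⊗[R] (R ⧸ maximalIdeal R)) ys) (hxs : IsWeaklyRegular M xs) :
    IsWeaklyRegular (N ⊗[R] M) (ys ++ xs.map (algebraMap R S)) := by
  induction ys generalizing N with
  | nil =>
    rw [List.nil_append, isWeaklyRegular_map_algebraMap_iff]
    exact hxs.isWeaklyRegular_lTensor
  | cons y ys ih =>
    rw [isWeaklyRegular_cons_iff, ← (quotSMulTopTensorEquiv y).isWeaklyRegular_congr] at hys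
    rw [List.cons_append, isWeaklyRegular_cons_iff,
      ← (quotSMulTopTensorEquiv y).isWeaklyRegular_congr]
    have := flat_quotSMulTop_of_isSMulRegular_fiber hys.1
    exact ⟨isSMulRegular_tensor_of_isSMulRegular_fiber M hys.1, ih hys.2⟩

end Regularity

section Dimension

open IsLocalRing

lemma supportDim_nonneg (R M : Type*) [CommRing R] [AddCommGroup M] [Module R M] [Nontrivial M] :
    0 ≤ Module.supportDim R M :=
  Order.krullDim_nonneg_iff.mpr Module.nonempty_support_of_nontrivial.to_subtype

lemma exists_supportDim_lt_natCast (R M : Type*) [CommRing R] [IsLocalRing R] [IsNoetherianRing R]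
    [AddCommGroup M] [Module R M] : ∃ d : ℕ, Module.supportDim R M < d :=
  ⟨_, ENat.WithBot.lt_add_one_iff.mpr <|
    (Module.supportDim_le_ringKrullDim R M).trans (ringKrullDim_le_spanFinrank_maximalIdeal R)⟩

lemma exists_mem_maximalIdeal_notMem_minimalPrimes {R : Type*} [CommRing R] [IsLocalRing R]
    [IsNoetherianRing R] {I : Ideal R} (h : maximalIdeal R ∉ I.minimalPrimes) :
    ∃ x ∈ maximalIdeal R, ∀ p ∈ I.minimalPrimes, x ∉ p := by
  by_contra! H
  obtain ⟨p, hp, hle⟩ := (Ideal.subset_union_prime_finite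
    I.finite_minimalPrimes_of_isNoetherianRing (f := id) ⊥ ⊥ fun p hp _ _ ↦ hp.1.1).mp
      fun x hx ↦ by simpa using H x hx
  exact h ((maximalIdeal.isMaximal R).eq_of_le hp.1.1.ne_top hle ▸ hp)

variable {R S : Type*} [CommRing R] [CommRing S] [Algebra R S] [IsLocalRing R]
  {M N : Type*} [AddCommGroup M] [Module R M]
  [AddCommGroup N] [Module R N] [Module S N] [IsScalarTower R S N] [Module.Finite S N]

lemma supportDim_tensor_le_of_mem_minimalPrimes
    (h : maximalIdeal R ∈ (Module.annihilator R M).minimalPrimes) :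
    Module.supportDim S (N ⊗[R] M) ≤ Module.supportDim S (N ⊗[R] (R ⧸ maximalIdeal R)) := by
  rw [Module.supportDim_eq_of_equiv (tensorQuotEquivQuotMapSMul (S := S) (maximalIdeal R))]
  refine Order.krullDim_le_of_strictMono (Set.inclusion fun q hq ↦ ?_) fun _ _ h ↦ h
  rw [Module.support_quotient]
  obtain ⟨hqN, hqM⟩ := support_tensor_subset hq
  exact ⟨hqN, Ideal.map_le_iff_le_comap.mpr <|
    h.2 ⟨inferInstance, Ideal.map_le_iff_le_comap.mp hqM⟩ (le_maximalIdeal (q.comap _).2.ne_top)⟩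

variable [IsLocalRing S] [IsNoetherianRing S] [IsLocalHom (algebraMap R S)] [Module.Finite R M]

variable (M N) in
lemma supportDim_tensor_le_supportDim_tensor_quotSMulTop_succ {x : R} (hx : x ∈ maximalIdeal R) :
    Module.supportDim S (N ⊗[R] M) ≤ Module.supportDim S (N ⊗[R] QuotSMulTop x M) + 1 := by
  have := finite_tensor (R := R) (S := S) (M := M) (N := N)
  rw [← Module.supportDim_eq_of_equiv (quotSMulTopAlgebraMapTensorEquiv M N x)]
  exact Module.supportDim_le_supportDim_quotSMulTop_succ (map_nonunit (algebraMap R S) x hx)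

theorem supportDim_tensor_le [IsNoetherianRing R] :
    Module.supportDim S (N ⊗[R] M) ≤
      Module.supportDim R M + Module.supportDim S (N ⊗[R] (R ⧸ maximalIdeal R)) := by
  obtain ⟨d, hd⟩ := exists_supportDim_lt_natCast R M
  induction d generalizing M with
  | zero =>
    have : Subsingleton M :=
      (Module.supportDim_eq_bot_iff_subsingleton R M).mp ((WithBot.lt_zero_iff_eq_bot _).mp hd)
    rw [Module.supportDim_eq_bot_of_subsingleton S]
    exact bot_le
  | succ d ih =>
    rcases subsingleton_or_nontrivial M with _ | _
    · rw [Module.supportDim_eq_bot_of_subsingleton S (N ⊗[R] M)]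
      exact bot_le
    by_cases h : maximalIdeal R ∈ (Module.annihilator R M).minimalPrimes
    · exact (supportDim_tensor_le_of_mem_minimalPrimes h).trans
        (le_add_of_nonneg_left (supportDim_nonneg R M))
    obtain ⟨x, hx, hxp⟩ := exists_mem_maximalIdeal_notMem_minimalPrimes h
    have hdim :=
      Module.supportDim_quotSMulTop_succ_eq_of_notMem_minimalPrimes_of_mem_maximalIdeal hxp hx
    have hlt : Module.supportDim R (QuotSMulTop x M) < d := by
      rw [← hdim] at hd
      exact lt_of_add_lt_add_right (by exact_mod_cast hd)
    calc Module.supportDim S (N ⊗[R] M)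
        ≤ Module.supportDim S (N ⊗[R] QuotSMulTop x M) + 1 :=
          supportDim_tensor_le_supportDim_tensor_quotSMulTop_succ M N hx
      _ ≤ (Module.supportDim R (QuotSMulTop x M) +
            Module.supportDim S (N ⊗[R] (R ⧸ maximalIdeal R))) + 1 := by
          gcongr
          exact ih hlt
      _ = _ := by rw [add_right_comm, hdim]

end Dimension

section Depth

open RingTheory.Sequence IsLocalRing

lemma length_le_localDepth {R : Type u} [CommRing R] [IsLocalRing R] {M : Type v} [AddCommGroup M]
    [Module R M] {rs : List R} (hmem : ∀ r ∈ rs, r ∈ maximalIdeal R) (h : IsRegular M rs) :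
    (rs.length : ℕ∞) ≤ localDepth R M :=
  le_sSup ⟨rs, rfl, hmem, h⟩

lemma localDepth_add_le {R : Type u} [CommRing R] [IsLocalRing R] {M : Type v} [AddCommGroup M]
    [Module R M] [Nontrivial M] {a b : ℕ∞}
    (h : ∀ rs : List R, (∀ r ∈ rs, r ∈ maximalIdeal R) → IsRegular M rs → rs.length + b ≤ a) :
    localDepth R M + b ≤ a := by
  rw [localDepth, idealDepth, ENat.sSup_add]
  · refine iSup₂_le ?_
    rintro _ ⟨rs, rfl, hmem, hreg⟩
    exact h rs hmem hreg
  · exact ⟨0, [], rfl, by simp, .nil R M⟩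

lemma localDepth_eq_of_equiv {R : Type u} [CommRing R] [IsLocalRing R] {M : Type v} {M' : Type w}
    [AddCommGroup M] [Module R M] [AddCommGroup M'] [Module R M'] (e : M ≃ₗ[R] M') :
    localDepth R M = localDepth R M' := by
  simp only [localDepth, idealDepth, e.isRegular_congr]

section Surjective

variable {S : Type u} {T : Type v} [CommRing S] [CommRing T] [Algebra S T] {F : Type w}
  [AddCommGroup F] [Module S F] [Module T F] [IsScalarTower S T F]

lemma localDepth_le_of_surjective_algebraMap [IsLocalRing S] [IsLocalRing T]
    [Module.Finite S F] [Nontrivial F] (h : Function.Surjective (algebraMap S T)) :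
    localDepth T F ≤ localDepth S F := by
  refine sSup_le ?_
  rintro _ ⟨rs, rfl, hmem, hreg⟩
  obtain ⟨ss, rfl⟩ := List.map_surjective_iff.mpr h rs
  rw [List.length_map]
  have hss : ∀ s ∈ ss, s ∈ maximalIdeal S := fun s hs hu ↦
    hmem _ (List.mem_map_of_mem hs) (hu.map _)
  exact length_le_localDepth hss (.of_isWeaklyRegular_of_mem_maximalIdeal _ hss
    ((isWeaklyRegular_map_algebraMap_iff T F ss).mp hreg.1))

lemma supportDim_eq_of_surjective_algebraMap [Module.Finite S F]
    (h : Function.Surjective (algebraMap S T)) :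
    Module.supportDim S F = Module.supportDim T F := by
  have : Module.Finite T F := .of_restrictScalars_finite S T F
  rw [Module.supportDim_eq_ringKrullDim_quotient_annihilator,
    Module.supportDim_eq_ringKrullDim_quotient_annihilator]
  have hcomap : Module.annihilator S F = (Module.annihilator T F).comap (algebraMap S T) :=
    Module.comap_annihilator.symm
  exact (RingEquiv.ofBijective (Ideal.quotientMap _ (algebraMap S T) hcomap.le)
    ⟨Ideal.quotientMap_injective' hcomap.ge, Ideal.quotientMap_surjective h⟩).ringKrullDim

end Surjective

lemma nontrivial_of_nontrivial_tensor_left (R N M : Type*) [CommRing R] [AddCommGroup N]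
    [Module R N] [AddCommGroup M] [Module R M] [Nontrivial (N ⊗[R] M)] : Nontrivial N :=
  not_subsingleton_iff_nontrivial.mp fun _ ↦ not_subsingleton (N ⊗[R] M) inferInstance

lemma nontrivial_of_nontrivial_tensor_right (R N M : Type*) [CommRing R] [AddCommGroup N]
    [Module R N] [AddCommGroup M] [Module R M] [Nontrivial (N ⊗[R] M)] : Nontrivial M :=
  not_subsingleton_iff_nontrivial.mp fun _ ↦ not_subsingleton (N ⊗[R] M) inferInstance

lemma nontrivial_tensor_residue (R S N : Type*) [CommRing R] [CommRing S] [Algebra R S]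
    [IsLocalRing R] [IsLocalRing S] [IsLocalHom (algebraMap R S)] [AddCommGroup N] [Module R N]
    [Module S N] [IsScalarTower R S N] [Module.Finite S N] [Nontrivial N] :
    Nontrivial (N ⊗[R] (R ⧸ maximalIdeal R)) := by
  refine (tensorQuotEquivQuotMapSMul (S := S) (maximalIdeal R)).toEquiv.nontrivial_congr.mpr
    (Submodule.Quotient.nontrivial_iff.mpr
      (Submodule.top_ne_ideal_smul_of_le_jacobson_annihilator ?_).symm)
  exact (map_maximalIdeal_le (algebraMap R S)).trans (maximalIdeal_le_jacobson _)

lemma min_add_le_min_add_min {α : Type*} [AddCommMonoid α] [LinearOrder α] [IsOrderedAddMonoid α]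
    {a b c : α} (ha : 0 ≤ a) (hb : 0 ≤ b) (hc : 0 ≤ c) :
    min c (a + b) ≤ min c a + min c b := by
  rcases le_total c a with hca | hac
  · exact (min_le_left _ _).trans <| (min_eq_left hca).symm.le.trans <|
      le_add_of_nonneg_right (le_min hc hb)
  rcases le_total c b with hcb | hbc
  · exact (min_le_left _ _).trans <| (min_eq_left hcb).symm.le.trans <|
      le_add_of_nonneg_left (le_min hc ha)
  · rw [min_eq_right hac, min_eq_right hbc]
    exact min_le_right _ _

section FlatLocalHom

variable {R : Type u} {S : Type v} [CommRing R] [CommRing S] [Algebra R S]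
  [IsLocalRing R] [IsNoetherianRing R] [IsLocalRing S] [IsNoetherianRing S]
  [IsLocalHom (algebraMap R S)]
  {M : Type*} [AddCommGroup M] [Module R M] [Module.Finite R M]
  {N : Type*} [AddCommGroup N] [Module R N] [Module S N] [IsScalarTower R S N]
  [Module.Finite S N] [Module.Flat R N] [Nontrivial (N ⊗[R] M)]

theorem localDepth_add_le_localDepth_tensor :
    localDepth R M + localDepth S (N ⊗[R] (R ⧸ maximalIdeal R)) ≤ localDepth S (N ⊗[R] M) := by
  have := finite_tensor (R := R) (S := S) (M := M) (N := N)
  have := nontrivial_of_nontrivial_tensor_right R N M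
  have := nontrivial_of_nontrivial_tensor_left R N M
  have := nontrivial_tensor_residue R S N
  refine localDepth_add_le fun xs hxs hxreg ↦ ?_
  rw [add_comm]
  refine localDepth_add_le fun ys hys hyreg ↦ ?_
  have hmem : ∀ z ∈ ys ++ xs.map (algebraMap R S), z ∈ maximalIdeal S := by
    intro z hz
    rcases List.mem_append.mp hz with hz | hz
    · exact hys z hz
    · obtain ⟨x, hx, rfl⟩ := List.mem_map.mp hz
      exact map_nonunit (algebraMap R S) x (hxs x hx)
  have hreg : IsRegular (N ⊗[R] M) (ys ++ xs.map (algebraMap R S)) :=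
    .of_isWeaklyRegular_of_mem_maximalIdeal _ hmem
      (isWeaklyRegular_tensor hyreg.toIsWeaklyRegular hxreg.toIsWeaklyRegular)
  calc (ys.length + xs.length : ℕ∞)
      = (ys ++ xs.map (algebraMap R S)).length := by simp
    _ ≤ localDepth S (N ⊗[R] M) := length_le_localDepth hmem hreg

theorem min_supportDim_tensor_le_localDepth {n : ℕ}
    (hM : min (n : WithBot ℕ∞) (Module.supportDim R M) ≤ localDepth R M)
    (hF : min (n : WithBot ℕ∞) (Module.supportDim S (N ⊗[R] (R ⧸ maximalIdeal R))) ≤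
      localDepth S (N ⊗[R] (R ⧸ maximalIdeal R))) :
    min (n : WithBot ℕ∞) (Module.supportDim S (N ⊗[R] M)) ≤ localDepth S (N ⊗[R] M) := by
  have := nontrivial_of_nontrivial_tensor_right R N M
  have := nontrivial_of_nontrivial_tensor_left R N M
  have := nontrivial_tensor_residue R S N
  let F := N ⊗[R] (R ⧸ maximalIdeal R)
  calc min (n : WithBot ℕ∞) (Module.supportDim S (N ⊗[R] M))
      ≤ min (n : WithBot ℕ∞) (Module.supportDim R M + Module.supportDim S F) :=
        min_le_min_left _ supportDim_tensor_le
    _ ≤ min (n : WithBot ℕ∞) (Module.supportDim R M) +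
          min (n : WithBot ℕ∞) (Module.supportDim S F) :=
        min_add_le_min_add_min (supportDim_nonneg R M) (supportDim_nonneg S F) n.cast_nonneg
    _ ≤ (localDepth R M : WithBot ℕ∞) + localDepth S F := add_le_add hM hF
    _ ≤ localDepth S (N ⊗[R] M) := by exact_mod_cast localDepth_add_le_localDepth_tensor

end FlatLocalHom

end Depth

section BaseChange

/-- The base change to `S` of a tensor product `N ⊗[A] M`, where `N` is a `B`-module, is the tensor
product over `R` of the base changes of `N` to `S` and of `M` to `R`. -/
def tensorBaseChangeEquiv {A B R S : Type*} [CommRing A] [CommRing B] [CommRing R]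
    [CommRing S] [Algebra A B] [Algebra A R] [Algebra A S] [Algebra B S] [Algebra R S]
    [IsScalarTower A B S]
    {M M' N N' : Type*} [AddCommGroup M] [Module A M] [AddCommGroup M'] [Module A M'] [Module R M']
    [IsScalarTower A R M'] [AddCommGroup N] [Module A N] [Module B N] [IsScalarTower A B N]
    [AddCommGroup N'] [Module A N'] [Module B N'] [Module R N'] [Module S N']
    [IsScalarTower A R N'] [IsScalarTower A S N'] [IsScalarTower B S N'] [IsScalarTower R S N']
    {f : M →ₗ[A] M'} {g : N →ₗ[B] N'} (hf : IsBaseChange R f) (hg : IsBaseChange S g) :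
    S ⊗[B] (N ⊗[A] M) ≃ₗ[S] N' ⊗[R] M' :=
  (AlgebraTensorModule.assoc A B S S N M).symm ≪≫ₗ
    AlgebraTensorModule.congr hg.equiv (LinearEquiv.refl A M) ≪≫ₗ
    (AlgebraTensorModule.cancelBaseChange A R S N' M).symm ≪≫ₗ
    AlgebraTensorModule.congr (LinearEquiv.refl S N') hf.equiv

lemma flat_of_isBaseChange_of_flat {A B S : Type*} [CommRing A] [CommRing B] [CommRing S]
    [Algebra A B] [Algebra A S] [Algebra B S] [IsScalarTower A B S] [Module.Flat B S]
    {N N' : Type*} [AddCommGroup N] [Module A N] [Module B N] [IsScalarTower A B N]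
    [Module.Flat A N] [AddCommGroup N'] [Module A N'] [Module B N'] [Module S N']
    [IsScalarTower A S N'] [IsScalarTower B S N'] {g : N →ₗ[B] N'} (hg : IsBaseChange S g) :
    Module.Flat A N' := by
  suffices Module.Flat A (S ⊗[B] N) from .of_linearEquiv (hg.equiv.restrictScalars A).symm
  refine Module.Flat.iff_lTensor_injective'.mpr fun I ↦ ?_
  let j : N ⊗[A] I →ₗ[B] N ⊗[A] A := AlgebraTensorModule.lTensor B N I.subtype
  have hj : Function.Injective j :=
    Module.Flat.lTensor_preserves_injective_linearMap I.subtype I.injective_subtype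
  have hSj : Function.Injective (AlgebraTensorModule.lTensor S S j) :=
    Module.Flat.lTensor_preserves_injective_linearMap j hj
  have hcomm : (AlgebraTensorModule.assoc A B S S N A).toLinearMap ∘ₗ
      AlgebraTensorModule.lTensor S (S ⊗[B] N) I.subtype =
      AlgebraTensorModule.lTensor S S j ∘ₗ (AlgebraTensorModule.assoc A B S S N I).toLinearMap := by
    ext
    simp [j]
  have h : Function.Injective (AlgebraTensorModule.lTensor S S j ∘ₗ
      (AlgebraTensorModule.assoc A B S S N I).toLinearMap) :=
    hSj.comp (AlgebraTensorModule.assoc A B S S N I).injective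
  rw [← hcomm, LinearMap.coe_comp] at h
  exact h.of_comp

/-- If `S → T` is surjective with kernel `I`, the base change to `T` is the reduction modulo `I`
of the base change to `S`. -/
def quotientSMulEquivOfIsBaseChange {B S T : Type*} [CommRing B] [CommRing S] [CommRing T]
    [Algebra B S] [Algebra B T] [Algebra S T] [IsScalarTower B S T]
    {N N' F : Type*} [AddCommGroup N] [Module B N] [AddCommGroup N'] [Module B N'] [Module S N']
    [IsScalarTower B S N'] [AddCommGroup F] [Module B F] [Module S F] [Module T F]
    [IsScalarTower B T F] [IsScalarTower S T F]
    {g : N →ₗ[B] N'} {f : N →ₗ[B] F} (hg : IsBaseChange S g) (hf : IsBaseChange T f)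
    (hsurj : Function.Surjective (algebraMap S T)) {I : Ideal S}
    (hI : RingHom.ker (algebraMap S T) = I) :
    (N' ⧸ (I • ⊤ : Submodule S N')) ≃ₗ[S] F :=
  (quotTensorEquivQuotSMul N' I).symm ≪≫ₗ
    AlgebraTensorModule.congr
      (Submodule.quotEquivOfEq I (LinearMap.ker (Algebra.linearMap S T)) hI.symm ≪≫ₗ
        (Algebra.linearMap S T).quotKerEquivOfSurjective hsurj) hg.equiv.symm ≪≫ₗ
    AlgebraTensorModule.cancelBaseChange B S S T N ≪≫ₗ
    hf.equiv.restrictScalars S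

lemma isBaseChange_mkQ_smul_top {R M : Type*} [CommRing R] [AddCommGroup M] [Module R M]
    (I : Ideal R) : IsBaseChange (R ⧸ I) (I • ⊤ : Submodule R M).mkQ :=
  .of_equiv ((quotTensorEquivQuotSMul M I).extendScalarsOfSurjective
    Ideal.Quotient.mk_surjective) fun x ↦ by
      change quotTensorEquivQuotSMul M I (Ideal.Quotient.mk I 1 ⊗ₜ x) = _
      rw [quotTensorEquivQuotSMul_mk_tmul, one_smul]
      rfl

end BaseChange

section Fiber

variable {A B} (P : PrimeSpectrum A) (N : Type u) [AddCommGroup N] [Module B N]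

instance : Algebra B (fiberRing A B P) :=
  inferInstanceAs (Algebra B (Localization (fiberSubmonoid A B P) ⧸ fiberIdeal A B P))

instance : Module B (fiberModule A B P N) :=
  inferInstanceAs (Module B (LocalizedModule (fiberSubmonoid A B P) N ⧸
    (fiberIdeal A B P • (⊤ : Submodule (Localization (fiberSubmonoid A B P))
      (LocalizedModule (fiberSubmonoid A B P) N)))))

instance : IsScalarTower B (fiberRing A B P) (fiberModule A B P N) :=
  inferInstanceAs (IsScalarTower B (Localization (fiberSubmonoid A B P) ⧸ fiberIdeal A B P)
    (LocalizedModule (fiberSubmonoid A B P) N ⧸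
      (fiberIdeal A B P • (⊤ : Submodule (Localization (fiberSubmonoid A B P))
        (LocalizedModule (fiberSubmonoid A B P) N)))))

/-- The canonical map from a module to its fiber module. -/
def toFiberModule : N →ₗ[B] fiberModule A B P N :=
  (fiberIdeal A B P • (⊤ : Submodule (Localization (fiberSubmonoid A B P))
    (LocalizedModule (fiberSubmonoid A B P) N))).mkQ.restrictScalars B ∘ₗ
      LocalizedModule.mkLinearMap (fiberSubmonoid A B P) N

lemma isBaseChange_toFiberModule :
    IsBaseChange (fiberRing A B P) (toFiberModule (A := A) (B := B) P N) :=
  have h := (IsLocalizedModule.isBaseChange (fiberSubmonoid A B P)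
    (Localization (fiberSubmonoid A B P))
    (LocalizedModule.mkLinearMap (fiberSubmonoid A B P) N)).comp
    (isBaseChange_mkQ_smul_top (fiberIdeal A B P))
  h

instance [Module.Finite B N] : Module.Finite (fiberRing A B P) (fiberModule A B P N) :=
  .equiv (isBaseChange_toFiberModule (A := A) (B := B) P N).equiv

lemma surjectiveOnStalks_algebraMap_fiberRing :
    (algebraMap B (fiberRing A B P)).SurjectiveOnStalks :=
  (RingHom.surjectiveOnStalks_of_surjective
    (Ideal.Quotient.mk_surjective (I := fiberIdeal A B P))).comp
      (RingHom.surjectiveOnStalks_of_isLocalization (fiberSubmonoid A B P) _)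

lemma isUnit_algebraMap_fiberRing {w : B} (hw : w ∈ fiberSubmonoid A B P) :
    IsUnit (algebraMap B (fiberRing A B P) w) :=
  (IsLocalization.map_units (Localization (fiberSubmonoid A B P)) ⟨w, hw⟩).map
    (Ideal.Quotient.mk (fiberIdeal A B P))

lemma exists_algebraMap_fiberRing_mul_eq (c : fiberRing A B P) :
    ∃ w ∈ fiberSubmonoid A B P, ∃ b : B,
      algebraMap B (fiberRing A B P) w * c = algebraMap B (fiberRing A B P) b := by
  obtain ⟨x, rfl⟩ := Ideal.Quotient.mk_surjective (I := fiberIdeal A B P) c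
  obtain ⟨b, w, rfl⟩ := IsLocalization.exists_mk'_eq (fiberSubmonoid A B P) x
  exact ⟨w, w.2, b, congrArg (Ideal.Quotient.mk (fiberIdeal A B P))
    (IsLocalization.mk'_spec' (Localization (fiberSubmonoid A B P)) b w)⟩

lemma algebraMap_fiberRing_eq_zero_iff {b : B} :
    algebraMap B (fiberRing A B P) b = 0 ↔
      ∃ w ∈ fiberSubmonoid A B P, w * b ∈ P.asIdeal.map (algebraMap A B) := by
  have h : algebraMap B (fiberRing A B P) b = 0 ↔
      algebraMap B (Localization (fiberSubmonoid A B P)) b ∈ fiberIdeal A B P :=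
    Ideal.Quotient.eq_zero_iff_mem
  rw [h, fiberIdeal, ← Ideal.map_map,
    IsLocalization.algebraMap_mem_map_algebraMap_iff (fiberSubmonoid A B P)]

lemma exists_comap_algebraMap_fiberRing_eq (Q : PrimeSpectrum B) :
    ∃ Q' : PrimeSpectrum (fiberRing A B (Q.comap (algebraMap A B))),
      Q'.comap (algebraMap B (fiberRing A B (Q.comap (algebraMap A B)))) = Q := by
  set P := Q.comap (algebraMap A B)
  have hdisj : Disjoint (fiberSubmonoid A B P : Set B) Q.asIdeal := by
    rw [Set.disjoint_left]
    rintro _ ⟨a, ha, rfl⟩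
    exact ha
  obtain ⟨q, hqQ⟩ : Q ∈ Set.range (PrimeSpectrum.comap
      (algebraMap B (Localization (fiberSubmonoid A B P)))) := by
    rwa [PrimeSpectrum.localization_comap_range _ (fiberSubmonoid A B P)]
  have hq : fiberIdeal A B P ≤ q.asIdeal := by
    rw [fiberIdeal, ← Ideal.map_map, Ideal.map_le_iff_le_comap, Ideal.map_le_iff_le_comap,
      ← PrimeSpectrum.comap_asIdeal, hqQ]
    exact le_rfl
  obtain ⟨Q', rfl⟩ : q ∈ Set.range (PrimeSpectrum.comap
      (Ideal.Quotient.mk (fiberIdeal A B P))) := by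
    rwa [range_comap_of_surjective _ _ Ideal.Quotient.mk_surjective,
      Ideal.mk_ker]
  exact ⟨Q', hqQ⟩

lemma ker_localRingHom_fiberRing {q : Ideal B} [q.IsPrime] {q' : Ideal (fiberRing A B P)}
    [q'.IsPrime] (h : q = q'.comap (algebraMap B (fiberRing A B P))) :
    RingHom.ker (Localization.localRingHom q q' (algebraMap B (fiberRing A B P)) h) =
      P.asIdeal.map (algebraMap A (Localization.AtPrime q)) := by
  have hW {w : B} (hw : w ∈ fiberSubmonoid A B P) : w ∉ q := fun hwq ↦
    q'.primeCompl.one_mem <| q'.eq_top_of_isUnit_mem (h.le hwq)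
      (isUnit_algebraMap_fiberRing P hw) ▸ Submodule.mem_top
  rw [IsScalarTower.algebraMap_eq A B (Localization.AtPrime q), ← Ideal.map_map]
  ext z
  obtain ⟨b, s, rfl⟩ := IsLocalization.exists_mk'_eq q.primeCompl z
  rw [RingHom.mem_ker, Localization.localRingHom_mk', IsLocalization.mk'_eq_zero_iff,
    IsLocalization.mk'_mem_map_algebraMap_iff q.primeCompl]
  constructor
  · rintro ⟨⟨c, hc⟩, hcb⟩
    obtain ⟨w, hw, d, hd⟩ := exists_algebraMap_fiberRing_mul_eq P c
    have hdq : d ∉ q := fun hdq ↦ hc <|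
      (Ideal.unit_mul_mem_iff_mem q' (isUnit_algebraMap_fiberRing P hw)).mp (hd ▸ h.le hdq)
    have hdb : algebraMap B (fiberRing A B P) (d * b) = 0 := by
      rw [map_mul, ← hd, mul_assoc, hcb, mul_zero]
    obtain ⟨v, hv, hvdb⟩ := (algebraMap_fiberRing_eq_zero_iff P).mp hdb
    exact ⟨v * d, q.primeCompl.mul_mem (hW hv) hdq, by rwa [mul_assoc]⟩
  · rintro ⟨t, ht, htb⟩
    have htb' : algebraMap B (fiberRing A B P) (t * b) = 0 :=
      (algebraMap_fiberRing_eq_zero_iff P).mpr ⟨1, one_mem _, by rwa [one_mul]⟩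
    exact ⟨⟨algebraMap B _ t, fun h' ↦ ht (h.ge h')⟩, by rwa [← map_mul]⟩

end Fiber

section SerreCondition

variable {A B} {n : ℕ}

lemma SerreCondS.of_equiv {M M' : Type*} [AddCommGroup M] [Module A M] [AddCommGroup M']
    [Module A M'] (e : M ≃ₗ[A] M') (h : SerreCondS A n M) : SerreCondS A n M' := by
  intro P hP
  let eP : LocalizedModule P.asIdeal.primeCompl M ≃ₗ[Localization.AtPrime P.asIdeal]
      LocalizedModule P.asIdeal.primeCompl M' :=
    LocalizedModule.equivTensorProduct _ M ≪≫ₗ e.baseChange A _ M M' ≪≫ₗ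
      (LocalizedModule.equivTensorProduct _ M').symm
  have h := h P (e.support_eq ▸ hP)
  rwa [heightAt, depthAt, supportDim, ← Module.supportDim, Module.supportDim_eq_of_equiv eP,
    localDepth_eq_of_equiv eP] at h

lemma SerreCondS.condC_succ {M : Type*} [AddCommGroup M] [Module A M] (h : SerreCondS A n M) :
    CondC A (n + 1) M := fun P hP ↦
  calc min ((n + 1 : ℕ) : WithBot ℕ∞) (heightAt A M P)
      ≤ min (n + 1 : WithBot ℕ∞) (heightAt A M P + 1) := by
        push_cast
        exact min_le_min_left _ (le_add_of_nonneg_right zero_le_one)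
    _ = min (n : WithBot ℕ∞) (heightAt A M P) + 1 := (min_add_add_right _ _ _)
    _ ≤ depthAt A M P + 1 := add_le_add_left (h P hP) 1

lemma map_maximalIdeal_localizationAtPrime (p : Ideal A) [p.IsPrime] (S : Type*) [CommRing S]
    [Algebra A S] [Algebra (Localization.AtPrime p) S]
    [IsScalarTower A (Localization.AtPrime p) S] :
    (IsLocalRing.maximalIdeal (Localization.AtPrime p)).map (algebraMap _ S) =
      p.map (algebraMap A S) := by
  rw [← Localization.AtPrime.map_eq_maximalIdeal, Ideal.map_map, ← IsScalarTower.algebraMap_eq]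

variable {N : Type u} [AddCommGroup N] [Module B N] [Module.Finite B N]

lemma SerreCondS.min_supportDim_quotient_le_localDepth {Q : PrimeSpectrum B}
    (hN : SerreCondS (fiberRing A B (Q.comap (algebraMap A B))) n
      (fiberModule A B (Q.comap (algebraMap A B)) N))
    {N' : Type*} [AddCommGroup N'] [Module B N'] [Module (Localization.AtPrime Q.asIdeal) N']
    [IsScalarTower B (Localization.AtPrime Q.asIdeal) N'] {g : N →ₗ[B] N'}
    (hg : IsBaseChange (Localization.AtPrime Q.asIdeal) g)
    {I : Ideal (Localization.AtPrime Q.asIdeal)}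
    (hI : I = (Q.comap (algebraMap A B)).asIdeal.map (algebraMap A _))
    [Nontrivial (N' ⧸ (I • ⊤ : Submodule (Localization.AtPrime Q.asIdeal) N'))] :
    min (n : WithBot ℕ∞) (Module.supportDim (Localization.AtPrime Q.asIdeal)
        (N' ⧸ (I • ⊤ : Submodule (Localization.AtPrime Q.asIdeal) N'))) ≤
      localDepth (Localization.AtPrime Q.asIdeal)
        (N' ⧸ (I • ⊤ : Submodule (Localization.AtPrime Q.asIdeal) N')) := by
  set P := Q.comap (algebraMap A B)
  obtain ⟨Q', hQ'⟩ := exists_comap_algebraMap_fiberRing_eq (A := A) Q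
  have : Q'.asIdeal.LiesOver Q.asIdeal := ⟨congrArg PrimeSpectrum.asIdeal hQ'.symm⟩
  let S := Localization.AtPrime Q.asIdeal
  let T := Localization.AtPrime Q'.asIdeal
  let F := LocalizedModule Q'.asIdeal.primeCompl (fiberModule A B P N)
  let _ : Algebra S T := Localization.AtPrime.algebraOfLiesOver Q.asIdeal Q'.asIdeal
  have hsurj : Function.Surjective (algebraMap S T) :=
    (surjectiveOnStalks_algebraMap_fiberRing P).localRingHom_surjective _ _ _
  have hker : RingHom.ker (algebraMap S T) = I := (ker_localRingHom_fiberRing P _).trans hI.symm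
  let _ : Module S F := .compHom F (algebraMap S T)
  have : IsScalarTower S T F := ⟨fun s t x ↦ mul_smul (algebraMap S T s) t x⟩
  have hF : IsBaseChange T ((LocalizedModule.mkLinearMap Q'.asIdeal.primeCompl
      (fiberModule A B P N)).restrictScalars B ∘ₗ toFiberModule P N) :=
    (isBaseChange_toFiberModule P N).comp
      (IsLocalizedModule.isBaseChange Q'.asIdeal.primeCompl T _)
  let eF := quotientSMulEquivOfIsBaseChange hg hF hsurj hker
  have : Nontrivial F := eF.symm.toEquiv.nontrivial
  have : Module.Finite S N' := .equiv hg.equiv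
  have : Module.Finite S F := .equiv eF
  rw [Module.supportDim_eq_of_equiv eF, localDepth_eq_of_equiv eF]
  calc min (n : WithBot ℕ∞) (Module.supportDim S F)
      = min (n : WithBot ℕ∞) (Module.supportDim T F) := by
        rw [supportDim_eq_of_surjective_algebraMap hsurj]
    _ ≤ localDepth T F := hN Q' ‹Nontrivial F›
    _ ≤ localDepth S F :=
      WithBot.coe_le_coe.mpr (localDepth_le_of_surjective_algebraMap hsurj)

theorem serreCondS_tensor [IsNoetherianRing A] [IsNoetherianRing B] [Module A N]
    [IsScalarTower A B N] [Module.Flat A N] {M : Type u} [AddCommGroup M] [Module A M]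
    [Module.Finite A M] (hM : SerreCondS A n M)
    (hN : ∀ P ∈ Module.support A M, SerreCondS (fiberRing A B P) n (fiberModule A B P N)) :
    SerreCondS B n (N ⊗[A] M) := by
  intro Q hQ
  let P := Q.comap (algebraMap A B)
  let R := Localization.AtPrime P.asIdeal
  let S := Localization.AtPrime Q.asIdeal
  let M' := LocalizedModule P.asIdeal.primeCompl M
  let N' := LocalizedModule Q.asIdeal.primeCompl N
  let X := LocalizedModule Q.asIdeal.primeCompl (N ⊗[A] M)
  have : Q.asIdeal.LiesOver P.asIdeal := ⟨rfl⟩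
  let _ : Algebra R S := Localization.AtPrime.algebraOfLiesOver P.asIdeal Q.asIdeal
  have : IsLocalHom (algebraMap R S) := Localization.isLocalHom_localRingHom _ _ _ rfl
  let _ : Module R N' := .compHom N' (algebraMap R S)
  have : IsScalarTower R S N' := ⟨fun r s x ↦ mul_smul (algebraMap R S r) s x⟩
  have : IsScalarTower A R N' := .to₁₂₄ A R S N'
  have hN' : IsBaseChange S (LocalizedModule.mkLinearMap Q.asIdeal.primeCompl N) :=
    IsLocalizedModule.isBaseChange Q.asIdeal.primeCompl S _
  let e : X ≃ₗ[S] N' ⊗[R] M' := LocalizedModule.equivTensorProduct _ _ ≪≫ₗ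
    tensorBaseChangeEquiv (IsLocalizedModule.isBaseChange P.asIdeal.primeCompl R
      (LocalizedModule.mkLinearMap _ M)) hN'
  have : Module.Flat B S := IsLocalization.flat S Q.asIdeal.primeCompl
  have : Module.Flat R N' := (Module.flat_iff_of_isLocalization R P.asIdeal.primeCompl N').mpr
    (flat_of_isBaseChange_of_flat hN')
  have : Nontrivial X := hQ
  have : Nontrivial (N' ⊗[R] M') := e.symm.toEquiv.nontrivial
  have hP : P ∈ Module.support A M := nontrivial_of_nontrivial_tensor_right R N' M'
  have := nontrivial_of_nontrivial_tensor_left R N' M'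
  have := nontrivial_tensor_residue R S N'
  let eF := tensorQuotEquivQuotMapSMul (S := S) (N := N') (IsLocalRing.maximalIdeal R)
  have := eF.symm.toEquiv.nontrivial
  have hF := (hN P hP).min_supportDim_quotient_le_localDepth hN'
    (map_maximalIdeal_localizationAtPrime P.asIdeal S)
  rw [← Module.supportDim_eq_of_equiv eF, ← localDepth_eq_of_equiv eF] at hF
  have h := min_supportDim_tensor_le_localDepth (hM P hP) hF
  rwa [← Module.supportDim_eq_of_equiv e, ← localDepth_eq_of_equiv e] at h

end SerreCondition

theorem tensor_condC_succ_of_serreS_base_and_fibers_general (A B : Type u) [CommRing A]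
    [CommRing B] [IsNoetherianRing A] [IsNoetherianRing B] [Algebra A B] (n : ℕ)
    (M : Type u) [AddCommGroup M] [Module A M] [Module.Finite A M]
    (N : Type u) [AddCommGroup N] [Module A N] [Module B N] [IsScalarTower A B N]
    [Module.Finite B N] [Module.Flat A N]
    (hM : SerreCondS A n M)
    (hfib : ∀ P ∈ Module.support A M, SerreCondS (fiberRing A B P) n (fiberModule A B P N)) :
    SerreCondS B n (M ⊗[A] N) :=
  let e : N ⊗[A] M ≃ₗ[B] M ⊗[A] N := .symm
    { TensorProduct.comm A M N with
      map_smul' := fun _ _ ↦ (TensorProduct.comm A M N).apply_symm_apply _ }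
  (serreCondS_tensor hM hfib).of_equiv e

theorem tensor_condC_succ_of_serreS_base_and_fibers (A B : Type u) [CommRing A] [CommRing B] [IsNoetherianRing A] [IsNoetherianRing B]
    [Algebra A B] (n : ℕ)
    (M : Type u) [AddCommGroup M] [Module A M] [Module.Finite A M]
    (N : Type u) [AddCommGroup N] [Module A N] [Module B N] [IsScalarTower A B N]
    [Module.Finite B N] [Module.Flat A N]
    (hM : SerreCondS A n M)
    (hfib : ∀ P ∈ Module.support A M, SerreCondS (fiberRing A B P) n (fiberModule A B P N)) :
    CondC B (n + 1) (M ⊗[A] N) :=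
  (tensor_condC_succ_of_serreS_base_and_fibers_general A B n M N hM hfib).condC_succ

end
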